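/- Let q ≥ 2 be an integer, let a be an integer with 0 < a < q and gcd(a,q) = 1, let a/q = [0;c₁,…,c_s], and let M > 0 be a real number. (i) If every pair of integers (x,y) with ax ≡ y (mod q), 1 ≤ x < q and 1 ≤ |y| < q satisfies x·|y| ≥ q/M, then c_j ≤ M for all j = 1,…,s. (ii) Conversely, if c_j ≤ M for all j = 1,…,s, then every pair of integers (x,y) with ax ≡ y (mod q), 1 ≤ x < q and 1 ≤ |y| < q satisfies x·|y| ≥ q/(4M). -/

import Mathlib

/-- The value of the regular continued fraction `[0; c₁, …, c_s]`. -/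
def cfVal (l : List ℕ) : ℚ :=
  l.foldr (fun c r => 1 / ((c : ℚ) + r)) 0

/-- `IsCFOf x l` means that `l = [c₁, …, c_s]` is the regular continued fraction
expansion of `x`, i.e. `x = [0; c₁, …, c_s]`, all partial quotients are positive
integers and the last one is at least `2`. -/
def IsCFOf (x : ℚ) (l : List ℕ) : Prop :=
  (∀ c ∈ l, 1 ≤ c) ∧ (∀ h : l ≠ [], 2 ≤ l.getLast h) ∧ cfVal l = x

theorem cfVal_cons' (c : ℕ) (l : List ℕ) : cfVal (c :: l) = 1 / ((c : ℚ) + cfVal l) := rfl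

theorem cfVal_nonneg' (l : List ℕ) : 0 ≤ cfVal l := by
  induction l with
  | nil => simp [cfVal]
  | cons c l ih => rw [cfVal_cons']; positivity

theorem cfVal_pos' (c : ℕ) (l : List ℕ) (hc : 1 ≤ c) : 0 < cfVal (c :: l) := by
  rw [cfVal_cons']
  have := cfVal_nonneg' l
  have : (1 : ℚ) ≤ c := by exact_mod_cast hc
  positivity

theorem cfVal_lt_one' (l : List ℕ) (h1 : ∀ c ∈ l, 1 ≤ c)
    (h2 : ∀ h : l ≠ [], 2 ≤ l.getLast h) : cfVal l < 1 := by
  match l with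
  | [] => simp [cfVal]
  | [c] =>
    have := h2 (by simp)
    simp only [List.getLast_singleton] at this
    have h : (2 : ℚ) ≤ c := by exact_mod_cast this
    rw [cfVal_cons', div_lt_one] <;> simp [cfVal] <;> linarith
  | c :: d :: l =>
    have h := cfVal_pos' d l (h1 d (by simp))
    have hc : (1 : ℚ) ≤ c := by exact_mod_cast h1 c (by simp)
    rw [cfVal_cons', div_lt_one] <;> linarith

theorem getLast_tail' (c : ℕ) (l : List ℕ)
    (h2 : ∀ h : c :: l ≠ [], 2 ≤ (c :: l).getLast h) : ∀ h : l ≠ [], 2 ≤ l.getLast h := by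
  intro h
  have := h2 (by simp)
  rwa [List.getLast_cons h] at this

/-- One step of the Euclidean algorithm. -/
theorem step' (c : ℕ) (l : List ℕ) (hc : 1 ≤ c) (R S : ℤ) (hR : 0 < R)
    (hl : cfVal l < 1)
    (hS : (S : ℚ) = R * cfVal (c :: l)) :
    0 < S ∧ ((R - c * S : ℤ) : ℚ) = S * cfVal l ∧ 0 ≤ R - c * S ∧ R - c * S < S := by
  have hp := cfVal_pos' c l hc
  have hn := cfVal_nonneg' l
  have hRq : (0 : ℚ) < R := by exact_mod_cast hR
  have hSq : (0 : ℚ) < S := by rw [hS]; positivity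
  have hcq : (1 : ℚ) ≤ c := by exact_mod_cast hc
  have e : ((R - c * S : ℤ) : ℚ) = S * cfVal l := by
    have hne : (c : ℚ) + cfVal l ≠ 0 := by positivity
    rw [cfVal_cons'] at hS
    have : (S : ℚ) * (c + cfVal l) = R := by rw [hS]; field_simp
    push_cast
    linarith
  refine ⟨by exact_mod_cast hSq, e, ?_, ?_⟩
  · have : (0 : ℚ) ≤ ((R - c * S : ℤ) : ℚ) := by rw [e]; positivity
    exact_mod_cast this
  · have : ((R - c * S : ℤ) : ℚ) < S := by rw [e]; nlinarith
    exact_mod_cast this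

theorem part_one' (l : List ℕ) (h1 : ∀ c ∈ l, 1 ≤ c)
    (h2 : ∀ h : l ≠ [], 2 ≤ l.getLast h) (Q : ℤ) : ∀ (A B R S : ℤ), 0 ≤ A → 1 ≤ B → 0 < R →
    S < R → (S : ℚ) = R * cfVal l → B * R + A * S = Q → ∀ c ∈ l,
    ∃ u w : ℤ, 1 ≤ u * A + w * B ∧ u * A + w * B < Q ∧ 1 ≤ |w * S - u * R| ∧
      |w * S - u * R| < Q ∧ c * ((u * A + w * B) * |w * S - u * R|) ≤ Q := by
  induction l with
  | nil => simp
  | cons c l ih =>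
    intro A B R S hA hB hR hSR hS hQ d hd
    have h1' : ∀ c ∈ l, 1 ≤ c := fun x hx => h1 x (by simp [hx])
    have h2' := getLast_tail' c l h2
    have hc := h1 c (by simp)
    obtain ⟨s0, se, s1, s2⟩ := step' c l hc R S hR (cfVal_lt_one' l h1' h2') hS
    have hAS : 0 ≤ A * S := by positivity
    rcases List.mem_cons.1 hd with rfl | hd
    · refine ⟨0, 1, ?_⟩
      have e1 : (0 * A + 1 * B) = B := by ring
      have e2 : (1 * S - 0 * R) = S := by ring
      rw [e1, e2, abs_of_pos s0]
      refine ⟨hB, by nlinarith, s0, by nlinarith, by nlinarith⟩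
    · have hcz : (1 : ℤ) ≤ c := by exact_mod_cast hc
      obtain ⟨u, w, h⟩ := ih h1' h2' B (A + c * B) S (R - c * S) (by linarith)
        (by nlinarith) s0 s2 se (by rw [← hQ]; ring) d hd
      refine ⟨w, u + c * w, ?_⟩
      have e1 : w * A + (u + c * w) * B = u * B + w * (A + c * B) := by ring
      have e2 : |(u + c * w) * S - w * R| = |w * (R - c * S) - u * S| := by
        rw [← abs_neg]; congr 1; ring
      rw [e1, e2]
      exact h

theorem part_two' (l : List ℕ) (M : ℝ) (hM1 : 1 ≤ M) (h1 : ∀ c ∈ l, 1 ≤ c)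
    (h2 : ∀ h : l ≠ [], 2 ≤ l.getLast h) (hM : ∀ c ∈ l, (c : ℝ) ≤ M) (Q : ℤ) :
    ∀ (A B R S u w : ℤ), 0 ≤ A → A ≤ B → 1 ≤ B → 0 < R →
    (S : ℚ) = R * cfVal l → B * R + A * S = Q → B ≤ u * A + w * B → 1 ≤ |w * S - u * R| →
    (Q : ℝ) ≤ 3 * M * (((u * A + w * B) * |w * S - u * R| : ℤ) : ℝ) := by
  induction l with
  | nil =>
    intro A B R S u w hA hAB hB hR hS hQ hx hy
    have hS0 : S = 0 := by
      have : (S : ℚ) = 0 := by rw [hS]; simp [cfVal]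
      exact_mod_cast this
    subst hS0
    have hu : 1 ≤ |u| := by
      apply Int.one_le_abs
      rintro rfl
      simp at hy
    have e : |w * 0 - u * R| = |u| * R := by
      rw [← abs_neg, ← abs_of_pos hR, ← abs_mul]; congr 1; rw [abs_of_pos hR]; ring
    rw [e]
    have hz : Q ≤ (u * A + w * B) * (|u| * R) := by
      have : B * R ≤ (u * A + w * B) * (|u| * R) :=
        mul_le_mul hx (by nlinarith) hR.le (by linarith)
      linarith
    have hz' : (Q : ℝ) ≤ (((u * A + w * B) * (|u| * R) : ℤ) : ℝ) := by exact_mod_cast hz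
    have hp : (0 : ℝ) ≤ (((u * A + w * B) * (|u| * R) : ℤ) : ℝ) := by
      have : 0 ≤ (u * A + w * B) * (|u| * R) :=
        mul_nonneg (by linarith) (by positivity)
      exact_mod_cast this
    nlinarith
  | cons c l ih =>
    intro A B R S u w hA hAB hB hR hS hQ hx hy
    have h1' : ∀ c ∈ l, 1 ≤ c := fun x hx => h1 x (by simp [hx])
    have h2' := getLast_tail' c l h2
    have hc := h1 c (by simp)
    have hcM := hM c (by simp)
    obtain ⟨s0, se, s1, s2⟩ := step' c l hc R S hR (cfVal_lt_one' l h1' h2') hS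
    have hcz : (1 : ℤ) ≤ c := by exact_mod_cast hc
    have e1 : u * A + w * B = (w - c * u) * B + u * (A + c * B) := by ring
    have e2 : |w * S - u * R| = |u * (R - c * S) - (w - c * u) * S| := by
      rw [← abs_neg]; congr 1; ring
    have hQ' : (A + c * B) * S + B * (R - c * S) = Q := by rw [← hQ]; ring
    rw [e1] at hx ⊢
    rw [e2] at hy ⊢
    generalize w - c * u = v at hx hy ⊢
    generalize R - c * S = T at *
    rcases le_or_gt (A + c * B) (v * B + u * (A + c * B)) with h | h
    · exact ih h1' h2' (fun d hd => hM d (by simp [hd])) B (A + c * B) S T v u (by linarith)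
        (by nlinarith) (by nlinarith) s0 se hQ' h hy
    · have hy' : S ≤ |u * T - v * S| := by
        have hBp : 0 < A + c * B := by nlinarith
        rcases lt_trichotomy u 0 with hu | hu | hu
        · have : 0 < v := by
            by_contra hv
            nlinarith
          have : u * T ≤ 0 := by nlinarith
          have := neg_le_abs (u * T - v * S)
          nlinarith
        · subst hu
          have hv : 0 < v := by
            by_contra hv
            nlinarith
          have := neg_le_abs (0 * T - v * S)
          nlinarith
        · have : v < 0 := by
            by_contra hv
            nlinarith
          have : 0 ≤ u * T := by nlinarith
          have := le_abs_self (u * T - v * S)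
          nlinarith
      generalize v * B + u * (A + c * B) = x at *
      generalize |u * T - v * S| = y at *
      have hBS : B * S ≤ x * y := mul_le_mul hx hy' s0.le (by linarith)
      have hz : Q ≤ (c + 2) * (x * y) := by
        have : Q ≤ (c + 2) * (B * S) := by nlinarith
        nlinarith
      have hz' : (Q : ℝ) ≤ (c + 2) * ((x * y : ℤ) : ℝ) := by exact_mod_cast hz
      have hp : (0 : ℝ) ≤ ((x * y : ℤ) : ℝ) := by
        have : 0 ≤ x * y := le_trans (by positivity) hBS
        exact_mod_cast this
      nlinarith

theorem partial_quotients_via_hyperbola (q : ℕ) (hq : 2 ≤ q) (a : ℕ) (ha : 0 < a)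
    (haq : a < q) (hgcd : Nat.gcd a q = 1) (l : List ℕ)
    (hl : IsCFOf ((a : ℚ) / q) l) (M : ℝ) (hM : 0 < M) :
    ((∀ x y : ℤ, (a : ℤ) * x ≡ y [ZMOD (q : ℤ)] → 1 ≤ x → x < q → 1 ≤ |y| → |y| < q →
        (q : ℝ) / M ≤ (x : ℝ) * |(y : ℝ)|) → ∀ c ∈ l, (c : ℝ) ≤ M) ∧
    ((∀ c ∈ l, (c : ℝ) ≤ M) →
      ∀ x y : ℤ, (a : ℤ) * x ≡ y [ZMOD (q : ℤ)] → 1 ≤ x → x < q → 1 ≤ |y| → |y| < q →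
        (q : ℝ) / (4 * M) ≤ (x : ℝ) * |(y : ℝ)|) := by
  obtain ⟨h1, h2, h3⟩ := hl
  have hq0 : (0 : ℚ) < q := by exact_mod_cast (by omega : 0 < q)
  have hqr : (0 : ℝ) < q := by exact_mod_cast (by omega : 0 < q)
  have hS : (((a : ℤ)) : ℚ) = ((q : ℤ) : ℚ) * cfVal l := by
    rw [h3]; push_cast; field_simp
  constructor
  · intro H c hc
    obtain ⟨u, w, k1, k2, k3, k4, k5⟩ := part_one' l h1 h2 q 0 1 q a le_rfl le_rfl (by omega)
      (by omega) hS (by ring) c hc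
    have := H (u * 0 + w * 1) (w * a - u * q)
      (by
        apply Int.ModEq.symm
        rw [Int.modEq_iff_dvd]
        exact ⟨u, by ring⟩) k1 k2 k3 k4
    have k5' : (c : ℝ) * (((u * 0 + w * 1 : ℤ) : ℝ) * |((w * a - u * q : ℤ) : ℝ)|) ≤ q := by
      exact_mod_cast k5
    have hc0 : (0 : ℝ) ≤ c := by positivity
    have h6 : (c : ℝ) * (q / M) ≤ q := le_trans (mul_le_mul_of_nonneg_left this hc0) k5'
    have h7 : (c : ℝ) * (q / M) = (c / M) * q := by ring
    rw [h7] at h6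
    have h8 : (c : ℝ) / M ≤ 1 := by
      by_contra hh
      push Not at hh
      nlinarith
    rwa [div_le_one hM] at h8
  · intro H x y hxy hx _ hy _
    have hM1 : 1 ≤ M := by
      cases l with
      | nil =>
        exfalso
        have hS' : (a : ℚ) = 0 := by
          have : ((a : ℤ) : ℚ) = 0 := by rw [hS]; simp [cfVal]
          exact_mod_cast this
        have : a = 0 := by exact_mod_cast hS'
        omega
      | cons c l =>
        have := H c (by simp)
        have h : (1 : ℝ) ≤ c := by exact_mod_cast h1 c (by simp)
        linarith
    obtain ⟨u, hu⟩ := (Int.modEq_iff_dvd.1 hxy.symm)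
    have ey : y = x * a - u * q := by linarith
    have := part_two' l M hM1 h1 h2 H q 0 1 q a u x le_rfl (by norm_num) le_rfl (by omega) hS
      (by ring) (by linarith) (by rwa [← ey])
    rw [← ey] at this
    push_cast at this
    rw [div_le_iff₀ (by positivity)]
    have hp : 0 ≤ (x : ℝ) * |(y : ℝ)| := by
      have : (0 : ℝ) ≤ x := by exact_mod_cast (by omega : 0 ≤ x)
      positivity
    have h9 : 0 ≤ M * ((x : ℝ) * |(y : ℝ)|) := by positivity
    nlinarith
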